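/- Let 1 < p ≤ 2 and r ≥ 1. Then for all B ∈ M_n(ℂ), the map A ↦ tr[(B* A^p B)^{r/p}] is convex on the positive definite matrices M_n^{++}(ℂ). -/

import Mathlib

open Matrix
open scoped ComplexOrder

/-- Real power of a matrix, defined spectrally for Hermitian matrices (junk value `0` otherwise). -/
noncomputable def mpow {k : ℕ} (A : Matrix (Fin k) (Fin k) ℂ) (p : ℝ) : Matrix (Fin k) (Fin k) ℂ :=
  if hA : A.IsHermitian then
    (hA.eigenvectorUnitary : Matrix (Fin k) (Fin k) ℂ) *
      Matrix.diagonal (fun i => ((hA.eigenvalues i ^ p : ℝ) : ℂ)) *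
      (hA.eigenvectorUnitary : Matrix (Fin k) (Fin k) ℂ)ᴴ
  else 0

/-- A Schwarz map: `Φ(K*K) ≥ Φ(K)*Φ(K)` for all `K`. -/
def IsSchwarz {a b : ℕ} (Φ : Matrix (Fin a) (Fin a) ℂ →ₗ[ℂ] Matrix (Fin b) (Fin b) ℂ) : Prop :=
  ∀ K, (Φ (Kᴴ * K) - (Φ K)ᴴ * Φ K).PosSemidef

/-- A positive map: sends positive semidefinite matrices to positive semidefinite matrices. -/
def IsPositiveMap {a b : ℕ} (Φ : Matrix (Fin a) (Fin a) ℂ →ₗ[ℂ] Matrix (Fin b) (Fin b) ℂ) : Prop :=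
  ∀ X, X.PosSemidef → (Φ X).PosSemidef

/-- `Ψ` is the Hilbert–Schmidt adjoint of `Φ`: `⟨X, Φ Y⟩ = ⟨Ψ X, Y⟩`. -/
def IsHSAdjoint {a b : ℕ} (Φ : Matrix (Fin a) (Fin a) ℂ →ₗ[ℂ] Matrix (Fin b) (Fin b) ℂ)
    (Ψ : Matrix (Fin b) (Fin b) ℂ →ₗ[ℂ] Matrix (Fin a) (Fin a) ℂ) : Prop :=
  ∀ X Y, (Xᴴ * Φ Y).trace = ((Ψ X)ᴴ * Y).trace

/-!
Write `tr (B* A^p B)^s` with `s = r / p` as an optimum over an auxiliary positive matrix of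
expressions whose convexity follows from Ando's theorem: `(A, W) ↦ tr A^p K W^(1-p) K*` is jointly
convex for `1 ≤ p ≤ 2`.

Young's inequality, transported to traces through a pair of eigenbases, gives for `X ≥ 0`
* `tr X^s = max_Z  s tr (X Z^(s-1)) - (s - 1) tr Z^s` when `s ≥ 1`;
* `tr X^s = inf_W  s tr (X W^(1-p)) + (1 - s) tr W^(s (p-1) / (1-s))` when `0 < s < 1`.

For `X = B* A^p B` the first formula is a supremum of functions convex in `A`. In the second the
exponent `s (p-1) / (1-s)` is at least `1` exactly because `r = s p ≥ 1`, so by the first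
formula its power trace is convex in `W`; the right-hand side is then jointly convex in `(A, W)`,
and a partial infimum of a jointly convex function is convex.

Ando's theorem itself follows by writing `x^p y^(1-p)` as a positive integral of `x² / (x + t y)`:
completing the square shows that the quasi-entropy of each integrand is a supremum of functions
that are real-linear in `(A, B)`.
-/

section Convexity

variable {E F : Type*} [AddCommGroup E] [Module ℝ E] [AddCommGroup F] [Module ℝ F]

theorem convexOn_of_isLUB_image {ι : Type*} {s : Set E} {t : Set ι} {f : ι → E → ℝ} {g : E → ℝ}
    (hs : Convex ℝ s) (hf : ∀ i ∈ t, ConvexOn ℝ s (f i))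
    (hg : ∀ x ∈ s, IsLUB ((f · x) '' t) (g x)) : ConvexOn ℝ s g := by
  refine ⟨hs, fun x hx y hy a b ha hb hab ↦ (hg _ (hs hx hy ha hb hab)).2 ?_⟩
  rintro _ ⟨i, hi, rfl⟩
  have hfx : f i x ≤ g x := (hg x hx).1 ⟨i, hi, rfl⟩
  have hfy : f i y ≤ g y := (hg y hy).1 ⟨i, hi, rfl⟩
  exact ((hf i hi).2 hx hy ha hb hab).trans (by gcongr)

theorem convexOn_of_isGLB_image {s : Set E} {t : Set F} {f : E × F → ℝ} {g : E → ℝ}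
    (hs : Convex ℝ s) (hf : ConvexOn ℝ (s ×ˢ t) f)
    (hg : ∀ x ∈ s, IsGLB ((fun y ↦ f (x, y)) '' t) (g x)) : ConvexOn ℝ s g := by
  refine ⟨hs, fun x hx y hy a b ha hb hab ↦ le_of_forall_pos_le_add fun ε hε ↦ ?_⟩
  obtain ⟨_, ⟨u, hu, rfl⟩, -, hxu⟩ := (hg x hx).exists_between (lt_add_of_pos_right (g x) hε)
  obtain ⟨_, ⟨v, hv, rfl⟩, -, hyv⟩ := (hg y hy).exists_between (lt_add_of_pos_right (g y) hε)
  have hmem := hf.1 (Set.mk_mem_prod hx hu) (Set.mk_mem_prod hy hv) ha hb hab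
  calc g (a • x + b • y)
      ≤ f (a • (x, u) + b • (y, v)) := (hg _ hmem.1).1 ⟨_, hmem.2, rfl⟩
    _ ≤ a * f (x, u) + b * f (y, v) :=
        hf.2 (Set.mk_mem_prod hx hu) (Set.mk_mem_prod hy hv) ha hb hab
    _ ≤ a * (g x + ε) + b * (g y + ε) := by gcongr
    _ = a • g x + b • g y + ε := by
        simp only [smul_eq_mul]
        linear_combination ε * hab

end Convexity

section Real

open Filter Topology

theorem mul_mul_rpow_sub_one_le {s x z : ℝ} (hs : 1 ≤ s) (hx : 0 ≤ x) (hz : 0 ≤ z) :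
    s * (x * z ^ (s - 1)) ≤ x ^ s + (s - 1) * z ^ s := by
  have hs0 : 0 < s := by linarith
  have h := Real.geom_mean_le_arith_mean2_weighted (w₁ := 1 / s) (w₂ := (s - 1) / s)
    (p₁ := x ^ s) (p₂ := z ^ s) (by positivity) (div_nonneg (by linarith) hs0.le)
    (by positivity) (by positivity) (by field_simp; ring)
  rw [← Real.rpow_mul hx, ← Real.rpow_mul hz, mul_one_div_cancel hs0.ne', Real.rpow_one,
    mul_div_cancel₀ _ hs0.ne'] at h
  calc s * (x * z ^ (s - 1)) ≤ s * (1 / s * x ^ s + (s - 1) / s * z ^ s) := by gcongr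
    _ = x ^ s + (s - 1) * z ^ s := by field_simp

theorem tendsto_mul_add_rpow {s x : ℝ} (hs : 0 < s) (hx : 0 ≤ x) :
    Tendsto (fun δ ↦ s * (x * (x + δ) ^ (s - 1)) + (1 - s) * (x + δ) ^ s) (𝓝[>] 0)
      (𝓝 (x ^ s)) := by
  have hadd : ContinuousAt (fun δ ↦ x + δ) 0 := by fun_prop
  have h2 : Tendsto (fun δ ↦ (x + δ) ^ s) (𝓝 0) (𝓝 (x ^ s)) := by
    simpa only [add_zero] using (hadd.rpow_const (p := s) (.inr hs.le)).tendsto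
  have h1 : Tendsto (fun δ ↦ x * (x + δ) ^ (s - 1)) (𝓝 0) (𝓝 (x ^ s)) := by
    rcases hx.eq_or_lt with rfl | hx
    · simp [Real.zero_rpow hs.ne']
    · have hx0 : x + 0 ≠ 0 := by simpa using hx.ne'
      have h := (hadd.rpow_const (p := s - 1) (.inl hx0)).tendsto.const_mul x
      rwa [add_zero, ← Real.rpow_one_add' hx.le (by simpa using hs.ne'), add_sub_cancel] at h
  have h := ((h1.const_mul s).add (h2.const_mul (1 - s))).mono_left
    (nhdsWithin_le_nhds (s := Set.Ioi 0))
  rwa [← add_mul, add_sub_cancel, one_mul] at h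

theorem rpow_le_mul_add_mul_rpow {s a x w : ℝ} (hs0 : 0 ≤ s) (hs : s < 1) (hx : 0 ≤ x)
    (hw : 0 < w) :
    x ^ s ≤ s * (x * w ^ (-a)) + (1 - s) * w ^ (s * a / (1 - s)) := by
  have hs1 : 0 < 1 - s := sub_pos.2 hs
  calc x ^ s = (x * w ^ (-a)) ^ s * (w ^ (s * a / (1 - s))) ^ (1 - s) := by
        rw [Real.mul_rpow hx (by positivity), ← Real.rpow_mul hw.le, ← Real.rpow_mul hw.le,
          mul_assoc, ← Real.rpow_add hw, div_mul_cancel₀ _ hs1.ne']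
        ring_nf
        simp
    _ ≤ s * (x * w ^ (-a)) + (1 - s) * w ^ (s * a / (1 - s)) :=
        Real.geom_mean_le_arith_mean2_weighted hs0 hs1.le (by positivity) (by positivity)
          (add_sub_cancel s 1)

end Real

section Matrix

open scoped MatrixOrder
open RCLike (re)
open MeasureTheory Filter Topology

variable {m n 𝕜 : Type*} [RCLike 𝕜]

theorem convex_posSemidef : Convex ℝ {A : Matrix n n 𝕜 | A.PosSemidef} :=
  fun _ hA _ hB _ _ ha hb _ ↦ (hA.smul ha).add (hB.smul hb)

theorem convex_posDef : Convex ℝ {A : Matrix n n 𝕜 | A.PosDef} :=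
  convex_iff_forall_pos.2 fun _ hA _ hB _ _ ha hb _ ↦ (hA.smul ha).add (hB.smul hb)

variable [Fintype m] [Fintype n] [DecidableEq m] [DecidableEq n]

/-- The matrix of `K` in the eigenbases of `A` and `B`. In these coordinates left multiplication by
`A` and right multiplication by `B` scale the entry `(i, j)` by the eigenvalues `a i` and `b j`. -/
noncomputable def eigenCoord {A : Matrix m m 𝕜} {B : Matrix n n 𝕜} (hA : A.IsHermitian)
    (hB : B.IsHermitian) (K : Matrix m n 𝕜) : Matrix m n 𝕜 :=
  (hA.eigenvectorUnitary : Matrix m m 𝕜)ᴴ * K * (hB.eigenvectorUnitary : Matrix n n 𝕜)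

theorem eigenCoord_surjective {A : Matrix m m 𝕜} {B : Matrix n n 𝕜} (hA : A.IsHermitian)
    (hB : B.IsHermitian) : Function.Surjective (eigenCoord hA hB) := by
  intro L
  refine ⟨(hA.eigenvectorUnitary : Matrix m m 𝕜) * L *
    (hB.eigenvectorUnitary : Matrix n n 𝕜)ᴴ, ?_⟩
  simp only [eigenCoord, ← star_eq_conjTranspose, Matrix.mul_assoc, Unitary.coe_star_mul_self,
    Matrix.mul_one]
  rw [← Matrix.mul_assoc, Unitary.coe_star_mul_self, Matrix.one_mul]

theorem re_trace_cfc_mul_mul_cfc_mul_conjTranspose {A : Matrix m m 𝕜} {B : Matrix n n 𝕜}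
    (hA : A.IsHermitian) (hB : B.IsHermitian) (f g : ℝ → ℝ) (K Y : Matrix m n 𝕜) :
    re (cfc f A * K * cfc g B * Yᴴ).trace = ∑ i, ∑ j, f (hA.eigenvalues i) * g (hB.eigenvalues j) *
        re (eigenCoord hA hB K i j * star (eigenCoord hA hB Y i j)) := by
  have hcyc : (cfc f A * K * cfc g B * Yᴴ).trace =
      (diagonal (fun i ↦ (f (hA.eigenvalues i) : 𝕜)) * eigenCoord hA hB K *
        diagonal (fun j ↦ (g (hB.eigenvalues j) : 𝕜)) * (eigenCoord hA hB Y)ᴴ).trace := by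
    simp only [hA.cfc_eq, hB.cfc_eq, IsHermitian.cfc, Unitary.conjStarAlgAut_apply, eigenCoord,
      star_eq_conjTranspose, conjTranspose_mul, conjTranspose_conjTranspose, Matrix.mul_assoc]
    rw [trace_mul_comm]
    simp only [Matrix.mul_assoc]
    rfl
  rw [hcyc, trace, map_sum]
  refine Finset.sum_congr rfl fun i _ ↦ ?_
  rw [diag_apply, mul_apply, map_sum]
  refine Finset.sum_congr rfl fun j _ ↦ ?_
  rw [mul_diagonal, diagonal_mul, conjTranspose_apply, ← RCLike.re_ofReal_mul]
  congr 1
  push_cast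
  ring

theorem re_trace_cfc {A : Matrix n n 𝕜} (hA : A.IsHermitian) (f : ℝ → ℝ) :
    re (cfc f A).trace = ∑ i, f (hA.eigenvalues i) := by
  rw [hA.cfc_eq, IsHermitian.cfc, Unitary.conjStarAlgAut_apply, trace_mul_cycle,
    Unitary.coe_star_mul_self, Matrix.one_mul, trace_diagonal, map_sum]
  simp only [Function.comp_apply, RCLike.ofReal_re]

theorem mul_re_trace_cfc_mul_cfc_le {A B : Matrix n n 𝕜} (hA : A.IsHermitian) (hB : B.IsHermitian)
    {f g h k : ℝ → ℝ} {c d e : ℝ}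
    (H : ∀ x ∈ spectrum ℝ A, ∀ y ∈ spectrum ℝ B, c * (f x * g y) ≤ d * h x + e * k y) :
    c * re (cfc f A * cfc g B).trace ≤ d * re (cfc h A).trace + e * re (cfc k B).trace := by
  have hfg := re_trace_cfc_mul_mul_cfc_mul_conjTranspose hA hB f g 1 1
  have hh := re_trace_cfc_mul_mul_cfc_mul_conjTranspose hA hB h 1 1 1
  have hk := re_trace_cfc_mul_mul_cfc_mul_conjTranspose hA hB 1 k 1 1
  rw [cfc_one ℝ B hB.isSelfAdjoint] at hh
  rw [cfc_one ℝ A hA.isSelfAdjoint] at hk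
  simp only [conjTranspose_one, Pi.one_apply, one_mul, mul_one] at hfg hh hk
  rw [hfg, hh, hk]
  simp only [Finset.mul_sum, ← Finset.sum_add_distrib, ← mul_assoc, ← add_mul]
  refine Finset.sum_le_sum fun i _ ↦ Finset.sum_le_sum fun j _ ↦ ?_
  gcongr
  · rw [RCLike.star_def, RCLike.mul_conj]
    norm_cast
    positivity
  · rw [mul_assoc]
    exact H _ (hA.eigenvalues_mem_spectrum_real i) _ (hB.eigenvalues_mem_spectrum_real j)

/-- The quasi-entropy `⟨K, φ(L_A, R_B) K⟩` in the Hilbert–Schmidt inner product, where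
`φ(L_A, R_B)` is the joint functional calculus of the commuting operators of left multiplication by
`A` and right multiplication by `B`, expanded in eigenbases. It is `0` when `A` or `B` is not
Hermitian. -/
noncomputable def quasiEntropy (φ : ℝ → ℝ → ℝ) (K : Matrix m n 𝕜) (A : Matrix m m 𝕜)
    (B : Matrix n n 𝕜) : ℝ :=
  open scoped Classical in
  if h : A.IsHermitian ∧ B.IsHermitian then
    ∑ i, ∑ j, φ (h.1.eigenvalues i) (h.2.eigenvalues j) * ‖eigenCoord h.1 h.2 K i j‖ ^ 2
  else 0

theorem quasiEntropy_eq_sum {A : Matrix m m 𝕜} {B : Matrix n n 𝕜} (hA : A.IsHermitian)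
    (hB : B.IsHermitian) (φ : ℝ → ℝ → ℝ) (K : Matrix m n 𝕜) :
    quasiEntropy φ K A B = ∑ i, ∑ j,
      φ (hA.eigenvalues i) (hB.eigenvalues j) * ‖eigenCoord hA hB K i j‖ ^ 2 :=
  dif_pos ⟨hA, hB⟩

theorem quasiEntropy_mul {A : Matrix m m 𝕜} {B : Matrix n n 𝕜} (hA : A.IsHermitian)
    (hB : B.IsHermitian) (f g : ℝ → ℝ) (K : Matrix m n 𝕜) :
    quasiEntropy (fun x y ↦ f x * g y) K A B = re (cfc f A * K * cfc g B * Kᴴ).trace := by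
  rw [quasiEntropy_eq_sum hA hB, re_trace_cfc_mul_mul_cfc_mul_conjTranspose hA hB]
  simp only [RCLike.star_def, RCLike.mul_conj, ← RCLike.ofReal_pow, RCLike.ofReal_re]

theorem quasiEntropy_const_mul (c : ℝ) (φ : ℝ → ℝ → ℝ) (K : Matrix m n 𝕜) (A : Matrix m m 𝕜)
    (B : Matrix n n 𝕜) :
    quasiEntropy (fun x y ↦ c * φ x y) K A B = c * quasiEntropy φ K A B := by
  unfold quasiEntropy
  split_ifs
  · simp only [Finset.mul_sum, mul_assoc]
  · rw [mul_zero]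

theorem two_mul_re_mul_star_sub (a : ℝ) {c : ℝ} (hc : c ≠ 0) (z w : 𝕜) :
    2 * a * re (z * star w) - c * ‖w‖ ^ 2 =
      a ^ 2 / c * ‖z‖ ^ 2 - ‖(a : 𝕜) * z - (c : 𝕜) * w‖ ^ 2 / c := by
  have hre : re ((a : 𝕜) * z * ((c : 𝕜) * star w)) = a * c * re (z * star w) := by
    rw [← RCLike.re_ofReal_mul]
    push_cast
    ring_nf
  rw [← RCLike.normSq_eq_def' ((a : 𝕜) * z - _), RCLike.normSq_sub, map_mul (starRingEnd 𝕜),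
    RCLike.conj_ofReal, ← RCLike.star_def, hre]
  simp only [map_mul, RCLike.normSq_eq_def', RCLike.norm_ofReal, sq_abs]
  field_simp
  ring

theorem re_trace_mul_mul_conjTranspose {A : Matrix m m 𝕜} {B : Matrix n n 𝕜} (hA : A.IsHermitian)
    (hB : B.IsHermitian) (K Y : Matrix m n 𝕜) :
    re (A * K * Yᴴ).trace = ∑ i, ∑ j, hA.eigenvalues i *
      re (eigenCoord hA hB K i j * star (eigenCoord hA hB Y i j)) := by
  have h := re_trace_cfc_mul_mul_cfc_mul_conjTranspose hA hB id 1 K Y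
  rw [cfc_id ℝ A hA.isSelfAdjoint, cfc_one ℝ B hB.isSelfAdjoint] at h
  simpa only [Matrix.mul_one, id, Pi.one_apply, mul_one] using h

theorem re_trace_mul_mul_conjTranspose_self {A : Matrix m m 𝕜} {B : Matrix n n 𝕜}
    (hA : A.IsHermitian) (hB : B.IsHermitian) (Y : Matrix m n 𝕜) :
    re (Y * B * Yᴴ).trace = ∑ i, ∑ j, hB.eigenvalues j * ‖eigenCoord hA hB Y i j‖ ^ 2 := by
  have h := quasiEntropy_mul hA hB 1 id Y
  rw [cfc_one ℝ A hA.isSelfAdjoint, cfc_id ℝ B hB.isSelfAdjoint, quasiEntropy_eq_sum hA hB] at h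
  simpa only [Matrix.one_mul, id, Pi.one_apply, one_mul] using h.symm

theorem isGreatest_quasiEntropy_sq_div {α β : ℝ}
    (hαβ : ∀ x y : ℝ, 0 < x → 0 < y → 0 < α * x + β * y) {A : Matrix m m 𝕜} {B : Matrix n n 𝕜}
    (hA : A.PosDef) (hB : B.PosDef) (K : Matrix m n 𝕜) :
    IsGreatest (Set.range fun Y : Matrix m n 𝕜 ↦ 2 * re (A * K * Yᴴ).trace -
        (α * re (A * Y * Yᴴ).trace + β * re (Y * B * Yᴴ).trace))
      (quasiEntropy (fun x y ↦ x ^ 2 / (α * x + β * y)) K A B) := by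
  set a := hA.1.eigenvalues
  set b := hB.1.eigenvalues
  set coord := eigenCoord hA.1 hB.1
  have hab i j : 0 < α * a i + β * b j := hαβ _ _ (hA.eigenvalues_pos i) (hB.eigenvalues_pos j)
  have key (Y : Matrix m n 𝕜) : 2 * re (A * K * Yᴴ).trace -
        (α * re (A * Y * Yᴴ).trace + β * re (Y * B * Yᴴ).trace) =
      ∑ i, ∑ j, (2 * a i * re (coord K i j * star (coord Y i j)) -
        (α * a i + β * b j) * ‖coord Y i j‖ ^ 2) := by
    rw [re_trace_mul_mul_conjTranspose hA.1 hB.1, re_trace_mul_mul_conjTranspose hA.1 hB.1,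
      re_trace_mul_mul_conjTranspose_self hA.1 hB.1]
    simp only [RCLike.star_def, RCLike.mul_conj, ← RCLike.ofReal_pow, RCLike.ofReal_re,
      Finset.mul_sum, ← Finset.sum_add_distrib, ← Finset.sum_sub_distrib]
    exact Finset.sum_congr rfl fun i _ ↦ Finset.sum_congr rfl fun j _ ↦ by ring
  simp only [key, two_mul_re_mul_star_sub _ (hab _ _).ne', quasiEntropy_eq_sum hA.1 hB.1]
  constructor
  · obtain ⟨Y, hY⟩ := eigenCoord_surjective hA.1 hB.1
      (of fun i j ↦ ((α * a i + β * b j : ℝ) : 𝕜)⁻¹ * ((a i : 𝕜) * coord K i j))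
    refine ⟨Y, Finset.sum_congr rfl fun i _ ↦ Finset.sum_congr rfl fun j _ ↦ ?_⟩
    have hab0 : ((α * a i + β * b j : ℝ) : 𝕜) ≠ 0 := RCLike.ofReal_ne_zero.2 (hab i j).ne'
    have hYij : ((α * a i + β * b j : ℝ) : 𝕜) * coord Y i j = (a i : 𝕜) * coord K i j :=
      (congrArg _ (congrFun (congrFun hY i) j)).trans (mul_inv_cancel_left₀ hab0 _)
    rw [hYij, sub_self, norm_zero, zero_pow two_ne_zero, zero_div, sub_zero]
  · rintro _ ⟨Y, rfl⟩
    refine Finset.sum_le_sum fun i _ ↦ Finset.sum_le_sum fun j _ ↦ sub_le_self _ ?_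
    have := hab i j
    positivity

theorem convexOn_quasiEntropy_sq_div {α β : ℝ}
    (hαβ : ∀ x y : ℝ, 0 < x → 0 < y → 0 < α * x + β * y) (K : Matrix m n 𝕜) :
    ConvexOn ℝ ({A : Matrix m m 𝕜 | A.PosDef} ×ˢ {B : Matrix n n 𝕜 | B.PosDef})
      (fun X ↦ quasiEntropy (fun x y ↦ x ^ 2 / (α * x + β * y)) K X.1 X.2) := by
  have hconv : Convex ℝ ({A : Matrix m m 𝕜 | A.PosDef} ×ˢ {B : Matrix n n 𝕜 | B.PosDef}) :=
    convex_posDef.prod convex_posDef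
  refine convexOn_of_isLUB_image (t := Set.univ)
    (f := fun (Y : Matrix m n 𝕜) X ↦ 2 * re (X.1 * K * Yᴴ).trace -
      (α * re (X.1 * Y * Yᴴ).trace + β * re (Y * X.2 * Yᴴ).trace)) hconv (fun Y _ ↦ ⟨hconv, ?_⟩)
    fun X hX ↦ ?_
  · intro X _ X' _ a b _ _ _
    simp only [Prod.fst_add, Prod.smul_fst, Prod.snd_add, Prod.smul_snd, Matrix.add_mul,
      Matrix.mul_add, Matrix.smul_mul, Matrix.mul_smul, trace_add, trace_smul, map_add,
      RCLike.smul_re, smul_eq_mul]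
    apply le_of_eq
    ring
  · rw [Set.image_univ]
    exact (isGreatest_quasiEntropy_sq_div hαβ hX.1 hX.2 K).isLUB

theorem quasiEntropy_congr {φ ψ : ℝ → ℝ → ℝ} (h : ∀ x y, 0 < x → 0 < y → φ x y = ψ x y)
    {A : Matrix m m 𝕜} {B : Matrix n n 𝕜} (hA : A.PosDef) (hB : B.PosDef) (K : Matrix m n 𝕜) :
    quasiEntropy φ K A B = quasiEntropy ψ K A B := by
  simp only [quasiEntropy_eq_sum hA.1 hB.1, h _ _ (hA.eigenvalues_pos _) (hB.eigenvalues_pos _)]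

theorem integrable_quasiEntropy {T : Type*} [MeasurableSpace T] {μ : Measure T}
    {φ : T → ℝ → ℝ → ℝ} (hφ : ∀ x y, 0 < x → 0 < y → Integrable (φ · x y) μ)
    {A : Matrix m m 𝕜} {B : Matrix n n 𝕜} (hA : A.PosDef) (hB : B.PosDef) (K : Matrix m n 𝕜) :
    Integrable (fun t ↦ quasiEntropy (φ t) K A B) μ := by
  simp only [quasiEntropy_eq_sum hA.1 hB.1]
  exact integrable_finsetSum _ fun i _ ↦ integrable_finsetSum _ fun j _ ↦
    (hφ _ _ (hA.eigenvalues_pos i) (hB.eigenvalues_pos j)).mul_const _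

theorem quasiEntropy_integral {T : Type*} [MeasurableSpace T] {μ : Measure T}
    {φ : T → ℝ → ℝ → ℝ} (hφ : ∀ x y, 0 < x → 0 < y → Integrable (φ · x y) μ)
    {A : Matrix m m 𝕜} {B : Matrix n n 𝕜} (hA : A.PosDef) (hB : B.PosDef) (K : Matrix m n 𝕜) :
    quasiEntropy (fun x y ↦ ∫ t, φ t x y ∂μ) K A B = ∫ t, quasiEntropy (φ t) K A B ∂μ := by
  have hint i j := (hφ _ _ (hA.eigenvalues_pos i) (hB.eigenvalues_pos j)).mul_const
    (‖eigenCoord hA.1 hB.1 K i j‖ ^ 2)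
  simp only [quasiEntropy_eq_sum hA.1 hB.1]
  rw [integral_finsetSum _ fun i _ ↦ integrable_finsetSum _ fun j _ ↦ hint i j]
  refine Finset.sum_congr rfl fun i _ ↦ ?_
  rw [integral_finsetSum _ fun j _ ↦ hint i j]
  exact Finset.sum_congr rfl fun j _ ↦ (integral_mul_const _ _).symm

/- This is the perspective `y * (x / y) ^ p` of the integral representation of `u ^ p`. -/
theorem exists_measure_rpow_mul_rpow_one_sub_eq_integral {p : ℝ} (hp : p ∈ Set.Ioo 1 2) :
    ∃ μ : Measure ℝ, ∀ x y : ℝ, 0 < x → 0 < y →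
      IntegrableOn (fun t ↦ t ^ (p - 2) * (x ^ 2 / (x + t * y))) (Set.Ioi 0) μ ∧
        x ^ p * y ^ (1 - p) = ∫ t in Set.Ioi 0, t ^ (p - 2) * (x ^ 2 / (x + t * y)) ∂μ := by
  obtain ⟨μ, hμ⟩ := Real.exists_measure_rpow_eq_integral_rpowIntegrand₁₂ hp
  refine ⟨μ, fun x y hx hy ↦ ?_⟩
  obtain ⟨hint, heq⟩ := hμ (x / y) (div_pos hx hy).le
  have hpersp : Set.EqOn (fun t ↦ y * Real.rpowIntegrand₁₂ p t (x / y))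
      (fun t ↦ t ^ (p - 2) * (x ^ 2 / (x + t * y))) (Set.Ioi 0) := by
    intro t (ht : 0 < t)
    have hp' : p - 1 ∈ Set.Ioo 0 1 := ⟨by linarith [hp.1], by linarith [hp.2]⟩
    dsimp only
    rw [Real.rpowIntegrand₁₂_eq_mul_rpowIntegrand₀₁ (by positivity) ht,
      Real.rpowIntegrand₀₁_eq_pow_div hp' ht.le (by positivity), sub_sub, one_add_one_eq_two]
    field_simp
    ring
  refine ⟨IntegrableOn.congr_fun (hint.const_mul y) hpersp measurableSet_Ioi, ?_⟩
  rw [← setIntegral_congr_fun measurableSet_Ioi hpersp, integral_const_mul, ← heq,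
    Real.div_rpow hx.le hy.le, Real.rpow_sub hy, Real.rpow_one]
  ring

theorem convexOn_quasiEntropy_rpow_of_mem_Ioo {p : ℝ} (hp : p ∈ Set.Ioo 1 2)
    (K : Matrix m n 𝕜) :
    ConvexOn ℝ ({A : Matrix m m 𝕜 | A.PosDef} ×ˢ {B : Matrix n n 𝕜 | B.PosDef})
      (fun X ↦ quasiEntropy (fun x y ↦ x ^ p * y ^ (1 - p)) K X.1 X.2) := by
  obtain ⟨μ, hμ⟩ := exists_measure_rpow_mul_rpow_one_sub_eq_integral hp
  let φ (t x y : ℝ) : ℝ := t ^ (p - 2) * (x ^ 2 / (x + t * y))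
  have hφ x y (hx : 0 < x) (hy : 0 < y) : IntegrableOn (φ · x y) (Set.Ioi 0) μ := (hμ x y hx hy).1
  have hconv : ∀ᵐ t ∂μ.restrict (Set.Ioi 0),
      ConvexOn ℝ ({A : Matrix m m 𝕜 | A.PosDef} ×ˢ {B : Matrix n n 𝕜 | B.PosDef})
        (fun X ↦ quasiEntropy (φ t) K X.1 X.2) := by
    filter_upwards [ae_restrict_mem measurableSet_Ioi] with t (ht : 0 < t)
    have h := convexOn_quasiEntropy_sq_div (α := 1) (β := t) (fun x y hx hy ↦ by positivity) K
    simpa only [φ, quasiEntropy_const_mul, one_mul, smul_eq_mul] using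
      h.smul (Real.rpow_nonneg ht.le (p - 2))
  have hint : ∀ X ∈ {A : Matrix m m 𝕜 | A.PosDef} ×ˢ {B : Matrix n n 𝕜 | B.PosDef},
      IntegrableOn (fun t ↦ quasiEntropy (φ t) K X.1 X.2) (Set.Ioi 0) μ :=
    fun X hX ↦ integrable_quasiEntropy hφ hX.1 hX.2 K
  refine (integral_convexOn_of_integrand_ae
    (f := fun t (X : Matrix m m 𝕜 × Matrix n n 𝕜) ↦ quasiEntropy (φ t) K X.1 X.2)
    (convex_posDef.prod convex_posDef) hconv hint).congr fun X hX ↦ ?_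
  calc ∫ t in Set.Ioi 0, quasiEntropy (φ t) K X.1 X.2 ∂μ
      = quasiEntropy (fun x y ↦ ∫ t in Set.Ioi 0, φ t x y ∂μ) K X.1 X.2 :=
        (quasiEntropy_integral hφ hX.1 hX.2 K).symm
    _ = quasiEntropy (fun x y ↦ x ^ p * y ^ (1 - p)) K X.1 X.2 :=
        quasiEntropy_congr (fun x y hx hy ↦ (hμ x y hx hy).2.symm) hX.1 hX.2 K

theorem convexOn_quasiEntropy_rpow {p : ℝ} (hp : p ∈ Set.Icc 1 2) (K : Matrix m n 𝕜) :
    ConvexOn ℝ ({A : Matrix m m 𝕜 | A.PosDef} ×ˢ {B : Matrix n n 𝕜 | B.PosDef})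
      (fun X ↦ quasiEntropy (fun x y ↦ x ^ p * y ^ (1 - p)) K X.1 X.2) := by
  rcases hp.1.eq_or_lt with rfl | hp1
  · refine (convexOn_quasiEntropy_sq_div (α := 1) (β := 0) (fun x y hx _ ↦ by simpa) K).congr
      fun X hX ↦ quasiEntropy_congr (fun x y hx _ ↦ ?_) hX.1 hX.2 K
    simp [field]
  rcases hp.2.eq_or_lt with rfl | hp2
  · refine (convexOn_quasiEntropy_sq_div (α := 0) (β := 1) (fun x y _ hy ↦ by simpa) K).congr
      fun X hX ↦ quasiEntropy_congr (fun x y _ _ ↦ ?_) hX.1 hX.2 K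
    norm_num [Real.rpow_neg_one, div_eq_mul_inv]
  exact convexOn_quasiEntropy_rpow_of_mem_Ioo ⟨hp1, hp2⟩ K

theorem convexOn_re_trace_rpow_mul_mul_rpow_mul_conjTranspose {p : ℝ} (hp : p ∈ Set.Icc 1 2)
    (K : Matrix m n 𝕜) :
    ConvexOn ℝ ({A : Matrix m m 𝕜 | A.PosDef} ×ˢ {B : Matrix n n 𝕜 | B.PosDef})
      (fun X ↦ re (X.1 ^ p * K * X.2 ^ (1 - p) * Kᴴ).trace) :=
  (convexOn_quasiEntropy_rpow hp K).congr fun X ⟨hA, hB⟩ ↦ by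
    rw [CFC.rpow_eq_cfc_real hA.posSemidef.nonneg, CFC.rpow_eq_cfc_real hB.posSemidef.nonneg]
    exact quasiEntropy_mul hA.1 hB.1 (· ^ p) (· ^ (1 - p)) K

theorem cfc_rpow {X : Matrix n n 𝕜} (hX : X.IsHermitian) {f : ℝ → ℝ}
    (hf : ∀ x ∈ spectrum ℝ X, 0 ≤ f x) (q : ℝ) : cfc f X ^ q = cfc (fun x ↦ f x ^ q) X := by
  have hcont (g : ℝ → ℝ) : ContinuousOn g (spectrum ℝ X) := X.finite_real_spectrum.continuousOn g
  rw [CFC.rpow_eq_cfc_real (cfc_nonneg hf), ← cfc_comp' (· ^ q) f X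
    ((X.finite_real_spectrum.image f).continuousOn _) (hcont f) hX.isSelfAdjoint]

theorem mul_cfc_eq_cfc_mul {X : Matrix n n 𝕜} (hX : X.IsHermitian) (f : ℝ → ℝ) :
    X * cfc f X = cfc (fun x ↦ x * f x) X := by
  have hcont (g : ℝ → ℝ) : ContinuousOn g (spectrum ℝ X) := X.finite_real_spectrum.continuousOn g
  rw [cfc_mul (fun x ↦ x) f X (hcont _) (hcont _), cfc_id' ℝ X hX.isSelfAdjoint]

theorem isGreatest_re_trace_rpow {s : ℝ} (hs : 1 ≤ s) {X : Matrix n n 𝕜} (hX : X.PosSemidef) :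
    IsGreatest ((fun Z : Matrix n n 𝕜 ↦
        s * re (X * Z ^ (s - 1)).trace - (s - 1) * re (Z ^ s).trace) '' {Z | Z.PosSemidef})
      (re (X ^ s).trace) := by
  constructor
  · refine ⟨X, hX, ?_⟩
    have hpow : X * X ^ (s - 1) = X ^ s := by
      rw [CFC.rpow_eq_cfc_real hX.nonneg, CFC.rpow_eq_cfc_real hX.nonneg, mul_cfc_eq_cfc_mul hX.1]
      refine cfc_congr fun x hx ↦ ?_
      rw [← Real.rpow_one_add' (spectrum_nonneg_of_nonneg hX.nonneg hx) (by linarith),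
        add_sub_cancel]
    simp only [hpow]
    ring
  · rintro _ ⟨Z, hZ, rfl⟩
    have h := mul_re_trace_cfc_mul_cfc_le hX.1 hZ.1 (f := id) (g := (· ^ (s - 1))) (h := (· ^ s))
      (k := (· ^ s)) (c := s) (d := 1) (e := s - 1) fun x hx z hz ↦ by
        simpa using mul_mul_rpow_sub_one_le hs (spectrum_nonneg_of_nonneg hX.nonneg hx)
          (spectrum_nonneg_of_nonneg hZ.nonneg hz)
    rw [cfc_id ℝ X hX.1.isSelfAdjoint, ← CFC.rpow_eq_cfc_real hX.nonneg,
      ← CFC.rpow_eq_cfc_real hZ.nonneg, ← CFC.rpow_eq_cfc_real hZ.nonneg, one_mul] at h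
    exact sub_le_iff_le_add.2 h

theorem re_trace_rpow_le {s a : ℝ} (hs0 : 0 ≤ s) (hs : s < 1) {X W : Matrix n n 𝕜}
    (hX : X.PosSemidef) (hW : W.PosDef) :
    re (X ^ s).trace ≤
      s * re (X * W ^ (-a)).trace + (1 - s) * re (W ^ (s * a / (1 - s))).trace := by
  have h := mul_re_trace_cfc_mul_cfc_le hX.1 hW.1 (f := id) (g := (· ^ (-a))) (h := (· ^ s))
    (k := (· ^ (s * a / (1 - s)))) (c := -s) (d := -1) (e := 1 - s) fun x hx w hw ↦ by
      have := rpow_le_mul_add_mul_rpow (a := a) hs0 hs (spectrum_nonneg_of_nonneg hX.nonneg hx)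
        (hW.isStrictlyPositive.spectrum_pos hw)
      simp only [id]
      linarith
  rw [cfc_id ℝ X hX.1.isSelfAdjoint, ← CFC.rpow_eq_cfc_real hX.nonneg,
    ← CFC.rpow_eq_cfc_real hW.posSemidef.nonneg, ← CFC.rpow_eq_cfc_real hW.posSemidef.nonneg] at h
  linarith

/- The bound is approached along `W = (X + δ) ^ ((1 - s) / a)` as `δ → 0`; for singular `X` it need
not be attained. -/
theorem isGLB_re_trace_rpow {s a : ℝ} (hs0 : 0 < s) (hs : s < 1) (ha : 0 < a)
    {X : Matrix n n 𝕜} (hX : X.PosSemidef) :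
    IsGLB ((fun W : Matrix n n 𝕜 ↦
        s * re (X * W ^ (-a)).trace + (1 - s) * re (W ^ (s * a / (1 - s))).trace) ''
      {W | W.PosDef}) (re (X ^ s).trace) := by
  refine isGLB_of_mem_closure ?_ ?_
  · rintro _ ⟨W, hW, rfl⟩
    exact re_trace_rpow_le hs0.le hs hX hW
  have hlim := tendsto_finsetSum Finset.univ fun i _ ↦
    tendsto_mul_add_rpow hs0 (hX.eigenvalues_nonneg i)
  rw [← re_trace_cfc hX.1 (· ^ s), ← CFC.rpow_eq_cfc_real hX.nonneg] at hlim
  refine mem_closure_of_tendsto hlim ?_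
  filter_upwards [self_mem_nhdsWithin] with δ (hδ : 0 < δ)
  have hpos y (hy : y ∈ spectrum ℝ X) : 0 < y + δ :=
    add_pos_of_nonneg_of_pos (spectrum_nonneg_of_nonneg hX.nonneg hy) hδ
  have hpow (q : ℝ) : cfc (fun y ↦ (y + δ) ^ ((1 - s) / a)) X ^ q =
      cfc (fun y ↦ (y + δ) ^ ((1 - s) / a * q)) X := by
    rw [cfc_rpow hX.1 fun y hy ↦ (Real.rpow_pos_of_pos (hpos y hy) _).le]
    exact cfc_congr fun y hy ↦ (Real.rpow_mul (hpos y hy).le _ _).symm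
  refine ⟨cfc (fun y ↦ (y + δ) ^ ((1 - s) / a)) X, ?_, ?_⟩
  · exact ((cfc_isStrictlyPositive_iff _ X (X.finite_real_spectrum.continuousOn _)
      hX.1.isSelfAdjoint).2 fun y hy ↦ Real.rpow_pos_of_pos (hpos y hy) _).posDef
  · have h1 : (1 - s) / a * -a = s - 1 := by field_simp; ring
    have h2 : (1 - s) / a * (s * a / (1 - s)) = s := by
      have : 1 - s ≠ 0 := by linarith
      field_simp
    simp only [hpow, h1, h2, mul_cfc_eq_cfc_mul hX.1, re_trace_cfc hX.1, Finset.mul_sum,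
      Finset.sum_add_distrib]

theorem convexOn_re_trace_rpow_of_forall_posSemidef {E : Type*} [AddCommGroup E] [Module ℝ E]
    {S : Set E} {G : E → Matrix n n 𝕜} (hS : Convex ℝ S) (hG : ∀ x ∈ S, (G x).PosSemidef)
    (hconv : ∀ M : Matrix n n 𝕜, M.PosSemidef → ConvexOn ℝ S fun x ↦ re (G x * M).trace)
    {s : ℝ} (hs : 1 ≤ s) : ConvexOn ℝ S fun x ↦ re (G x ^ s).trace := by
  refine convexOn_of_isLUB_image (t := {Z : Matrix n n 𝕜 | Z.PosSemidef})
    (f := fun Z x ↦ s * re (G x * Z ^ (s - 1)).trace - (s - 1) * re (Z ^ s).trace) hS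
    (fun Z _ ↦ ?_) fun x hx ↦ (isGreatest_re_trace_rpow hs (hG x hx)).isLUB
  have hZ := hconv _ (CFC.rpow_nonneg (a := Z) (y := s - 1)).posSemidef
  exact ConvexOn.sub (hZ.smul (c := s) (by linarith)) (concaveOn_const _ hS)

theorem convexOn_re_trace_rpow {s : ℝ} (hs : 1 ≤ s) :
    ConvexOn ℝ {X : Matrix n n 𝕜 | X.PosSemidef} fun X ↦ re (X ^ s).trace := by
  refine convexOn_re_trace_rpow_of_forall_posSemidef (E := Matrix n n 𝕜) (G := fun X ↦ X)
    (S := {X | X.PosSemidef}) convex_posSemidef (fun _ hX ↦ hX)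
    (fun M _ ↦ ⟨convex_posSemidef, fun X _ Y _ a b _ _ _ ↦ ?_⟩) hs
  simp only [Matrix.add_mul, Matrix.smul_mul, trace_add, trace_smul, map_add, RCLike.smul_re,
    smul_eq_mul, le_refl]

theorem convexOn_re_trace_conj_rpow_mul {l : Type*} [Fintype l] {p : ℝ} (hp : p ∈ Set.Icc 1 2)
    (B : Matrix m l 𝕜) {M : Matrix l l 𝕜} (hM : M.PosSemidef) :
    ConvexOn ℝ {A : Matrix m m 𝕜 | A.PosDef} fun A ↦ re (Bᴴ * A ^ p * B * M).trace := by
  classical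
  obtain ⟨N, rfl⟩ := CStarAlgebra.nonneg_iff_eq_mul_star_self.mp hM.nonneg
  have h := (convexOn_re_trace_rpow_mul_mul_rpow_mul_conjTranspose hp (B * N)).comp_affineMap
    ((AffineMap.id ℝ (Matrix m m 𝕜)).prod (AffineMap.const ℝ _ (1 : Matrix l l 𝕜)))
  refine (h.subset (fun A hA ↦ ⟨hA, PosDef.one⟩) convex_posDef).congr fun A _ ↦ ?_
  have hcyc : (A ^ p * (B * N) * (B * N)ᴴ).trace = (Bᴴ * A ^ p * B * (N * star N)).trace := by
    rw [conjTranspose_mul, ← Matrix.mul_assoc, trace_mul_comm _ Bᴴ]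
    simp only [Matrix.mul_assoc, star_eq_conjTranspose]
  have hone : (1 : Matrix l l 𝕜) ^ (1 - p) = 1 := CFC.one_rpow
  simpa [hone] using congrArg re hcyc

theorem convexOn_re_trace_conj_rpow_rpow_of_le {p s : ℝ} (hp : p ∈ Set.Icc 1 2) (hs : 1 ≤ s)
    (B : Matrix m n 𝕜) :
    ConvexOn ℝ {A : Matrix m m 𝕜 | A.PosDef} fun A ↦ re ((Bᴴ * A ^ p * B) ^ s).trace :=
  convexOn_re_trace_rpow_of_forall_posSemidef (E := Matrix m m 𝕜) (G := fun A ↦ Bᴴ * A ^ p * B)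
    (S := {A | A.PosDef}) convex_posDef
    (fun _ _ ↦ CFC.rpow_nonneg.posSemidef.conjTranspose_mul_mul_same B)
    (fun _ hM ↦ convexOn_re_trace_conj_rpow_mul hp B hM) hs

theorem convexOn_re_trace_conj_rpow_rpow_of_lt {p s : ℝ} (hp : p ∈ Set.Ioc 1 2) (hs : s < 1)
    (hps : 1 ≤ s * p) (B : Matrix m n 𝕜) :
    ConvexOn ℝ {A : Matrix m m 𝕜 | A.PosDef} fun A ↦ re ((Bᴴ * A ^ p * B) ^ s).trace := by
  have hp1 : 0 < p - 1 := sub_pos.2 hp.1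
  have hs0 : 0 < s := pos_of_mul_pos_left (zero_lt_one.trans_le hps) (by linarith)
  have hs1 : 0 < 1 - s := sub_pos.2 hs
  have hq : 1 ≤ s * (p - 1) / (1 - s) := by rw [le_div_iff₀ hs1]; linarith
  refine convexOn_of_isGLB_image (t := {W : Matrix n n 𝕜 | W.PosDef})
    (f := fun X ↦ s * re (Bᴴ * X.1 ^ p * B * X.2 ^ (-(p - 1))).trace +
      (1 - s) * re (X.2 ^ (s * (p - 1) / (1 - s))).trace) convex_posDef ?_ fun A _ ↦
    isGLB_re_trace_rpow hs0 hs hp1 (CFC.rpow_nonneg.posSemidef.conjTranspose_mul_mul_same B)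
  have hA := convexOn_re_trace_rpow_mul_mul_rpow_mul_conjTranspose ⟨hp.1.le, hp.2⟩ B
  have hW := ((convexOn_re_trace_rpow hq (n := n) (𝕜 := 𝕜)).comp_linearMap
    (LinearMap.snd ℝ (Matrix m m 𝕜) (Matrix n n 𝕜))).subset
      (fun X hX ↦ hX.2.posSemidef) (convex_posDef.prod convex_posDef)
  refine ((hA.smul hs0.le).add (hW.smul hs1.le)).congr fun X _ ↦ ?_
  have hcyc : (X.1 ^ p * B * X.2 ^ (1 - p) * Bᴴ).trace =
      (Bᴴ * X.1 ^ p * B * X.2 ^ (-(p - 1))).trace := by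
    rw [trace_mul_comm, neg_sub]
    simp only [Matrix.mul_assoc]
  simp only [Pi.add_apply, smul_eq_mul, hcyc, Function.comp_apply, LinearMap.snd_apply]

theorem stmt19_general {p r : ℝ} (hp1 : 1 ≤ p) (hp2 : p ≤ 2) (hr : 1 ≤ r) (B : Matrix m n 𝕜) :
    ConvexOn ℝ {A : Matrix m m 𝕜 | A.PosDef} fun A ↦ re ((Bᴴ * A ^ p * B) ^ (r / p)).trace := by
  have hp0 : 0 < p := by linarith
  rcases le_or_gt 1 (r / p) with hs | hs
  · exact convexOn_re_trace_conj_rpow_rpow_of_le ⟨hp1, hp2⟩ hs B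
  · have hrp : r < p := (div_lt_one hp0).1 hs
    exact convexOn_re_trace_conj_rpow_rpow_of_lt ⟨hr.trans_lt hrp, hp2⟩ hs
      (by rwa [div_mul_cancel₀ _ hp0.ne']) B

theorem mpow_eq_rpow {k : ℕ} {A : Matrix (Fin k) (Fin k) ℂ} (hA : A.PosSemidef) (p : ℝ) :
    mpow A p = A ^ p := by
  rw [CFC.rpow_eq_cfc_real hA.nonneg, hA.1.cfc_eq, mpow, dif_pos hA.1]
  rfl

theorem mpow_conj_mpow {k : ℕ} {A : Matrix (Fin k) (Fin k) ℂ} (hA : A.PosDef) (p q : ℝ)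
    (B : Matrix (Fin k) (Fin k) ℂ) :
    mpow (Bᴴ * mpow A p * B) q = (Bᴴ * A ^ p * B) ^ q := by
  rw [mpow_eq_rpow hA.posSemidef,
    mpow_eq_rpow (CFC.rpow_nonneg.posSemidef.conjTranspose_mul_mul_same B)]

end Matrix

theorem stmt19 {n : ℕ} (p r : ℝ) (hp0 : 1 < p) (hp1 : p ≤ 2) (hr : 1 ≤ r)
    (B : Matrix (Fin n) (Fin n) ℂ)
    (A₁ A₂ : Matrix (Fin n) (Fin n) ℂ) (hA₁ : A₁.PosDef) (hA₂ : A₂.PosDef)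
    (c : ℝ) (hc0 : 0 ≤ c) (hc1 : c ≤ 1) :
    (mpow (Bᴴ * mpow ((c : ℂ) • A₁ + ((1 : ℂ) - (c : ℂ)) • A₂) p * B) (r / p)).trace.re ≤
      c * (mpow (Bᴴ * mpow A₁ p * B) (r / p)).trace.re +
        (1 - c) * (mpow (Bᴴ * mpow A₂ p * B) (r / p)).trace.re := by
  have hconv := stmt19_general hp0.le hp1 hr B
  have hA := hconv.1 hA₁ hA₂ hc0 (sub_nonneg.2 hc1) (add_sub_cancel c 1)
  have h := hconv.2 hA₁ hA₂ hc0 (sub_nonneg.2 hc1) (add_sub_cancel c 1)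
  simp only [← mpow_conj_mpow hA₁, ← mpow_conj_mpow hA₂, ← mpow_conj_mpow hA] at h
  simpa [← Complex.coe_smul] using h
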